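/- Let G⃗ be an oriented graph. If G⃗ is not 2-mixing, then Mad(G⃗) ≥ 7/2. -/

import Mathlib

/-- A relation (digraph) is acyclic if no vertex lies on a directed cycle. -/
def RelAcyclic {V : Type} (r : V → V → Prop) : Prop :=
  ∀ v, ¬ Relation.TransGen r v v

/-- `α` is a `k`-dicolouring of the digraph `D`: each colour class induces
an acyclic subdigraph. -/
def IsDicolouring {V : Type} (D : V → V → Prop) (k : ℕ) (α : V → Fin k) : Prop :=
  ∀ c : Fin k, RelAcyclic (fun u v => D u v ∧ α u = c ∧ α v = c)

/-- Two colourings differ on exactly one vertex. -/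
def RecolAdj {V : Type} {k : ℕ} (α β : V → Fin k) : Prop :=
  ∃ v, α v ≠ β v ∧ ∀ w, w ≠ v → α w = β w

/-- A single edge of the `k`-dicolouring graph `D_k(D)`. -/
def RecolStep {V : Type} (D : V → V → Prop) (k : ℕ) (α β : V → Fin k) : Prop :=
  IsDicolouring D k α ∧ IsDicolouring D k β ∧ RecolAdj α β

/-- The digraph `D` is `k`-mixing: the `k`-dicolouring graph is connected. -/
def Mixing {V : Type} (D : V → V → Prop) (k : ℕ) : Prop :=
  ∀ α β : V → Fin k, IsDicolouring D k α → IsDicolouring D k β →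
    Relation.ReflTransGen (RecolStep D k) α β

/-- Out-degree of `v` in the subdigraph of `D` induced by `S`. -/
noncomputable def outDegOn {V : Type} (D : V → V → Prop) (S : Set V) (v : V) : ℕ :=
  {w ∈ S | D v w}.ncard

/-- In-degree of `v` in the subdigraph of `D` induced by `S`. -/
noncomputable def inDegOn {V : Type} (D : V → V → Prop) (S : Set V) (v : V) : ℕ :=
  {w ∈ S | D w v}.ncard

/-- An oriented graph: a digraph with no digon (hence also no loop). -/
def Oriented {V : Type} (D : V → V → Prop) : Prop :=
  ∀ u v, D u v → ¬ D v u

/-- A walk of length `m` in the `k`-dicolouring graph (a redicolouring sequence):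
consecutive dicolourings differ on exactly one vertex. -/
def RecolWalk {V : Type} (D : V → V → Prop) (k m : ℕ) (γ : ℕ → V → Fin k) : Prop :=
  (∀ i ≤ m, IsDicolouring D k (γ i)) ∧ ∀ i < m, RecolAdj (γ i) (γ (i + 1))

/-- A frozen `k`-dicolouring: no single vertex can be recoloured so as to
yield another `k`-dicolouring. -/
def FrozenDicolouring {V : Type} [DecidableEq V] (D : V → V → Prop) (k : ℕ)
    (α : V → Fin k) : Prop :=
  IsDicolouring D k α ∧
    ∀ (v : V) (c : Fin k), c ≠ α v → ¬ IsDicolouring D k (Function.update α v c)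

/-- The arc set of a digraph, as a set of ordered pairs. -/
def arcSet {V : Type} (D : V → V → Prop) : Set (V × V) := {p | D p.1 p.2}

/-- The arcs of `D` lying inside a set `S` of vertices. -/
def arcSetOn {V : Type} (D : V → V → Prop) (S : Set V) : Set (V × V) :=
  {p | p.1 ∈ S ∧ p.2 ∈ S ∧ D p.1 p.2}

/-!
Let `E` be a vertex-minimal subdigraph that is not `2`-mixing. Delete a vertex `s` together with its
pendants, the neighbours that have `s` as their only out-neighbour or as their only in-neighbour.
What remains is `2`-mixing, and a redicolouring path there lifts to `E` by recolouring the deleted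
star between consecutive steps, as long as the remaining in- and out-neighbours of `s` do not block
both colours of `s`. Hence `s` has at least three remaining neighbours, or else one remaining
in-neighbour and one remaining out-neighbour. In the second case some dicolouring `α` cannot be
redicoloured into its colour swap; from `α` the colour of `s` never changes, and `s` has pendants of
both kinds.

Now give each vertex the charge `2 * deg v`. Vertices of degree `3` lack one unit to reach `7`.
Such a vertex has a single out-neighbour or a single in-neighbour, and by default takes one unit
from it. If instead its colour and those of its two remaining neighbours never change from `α`, it
claims the unit from that one of the two which does not have its own colour. Every vertex can
afford this, so the average of `2 * deg` is at least `7`.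
-/

section

open Function Relation

variable {V : Type} {k : ℕ} {E : V → V → Prop}

/-! ### Cycles -/

theorem exists_succ_of_transGen_self {r : V → V → Prop} {v : V} (h : TransGen r v v) :
    ∃ y, r v y ∧ TransGen r y y := by
  obtain ⟨y, hvy, hyv⟩ := TransGen.head'_iff.1 h
  exact ⟨y, hvy, TransGen.tail' hyv hvy⟩

theorem exists_pred_of_transGen_self {r : V → V → Prop} {v : V} (h : TransGen r v v) :
    ∃ y, r y v ∧ TransGen r y y := by
  obtain ⟨y, hvy, hyv⟩ := TransGen.tail'_iff.1 h
  exact ⟨y, hyv, TransGen.head' hyv hvy⟩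

theorem RelAcyclic.mono {q r : V → V → Prop} (hq : RelAcyclic q) (h : ∀ a b, r a b → q a b) :
    RelAcyclic r :=
  fun v hv => hq v (TransGen.mono h _ _ hv)

theorem RelAcyclic.of_restrict {r : V → V → Prop} {T : Set V}
    (h : RelAcyclic fun a b => r a b ∧ a ∈ T ∧ b ∈ T) (hT : ∀ x, TransGen r x x → x ∈ T) :
    RelAcyclic r := by
  have walk_in_T : ∀ v w, TransGen r v w → TransGen r w v →
      TransGen (fun a b => r a b ∧ a ∈ T ∧ b ∈ T) v w := by
    intro v w hvw
    induction hvw with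
    | single hvb => exact fun hbv => .single ⟨hvb, hT _ (.head hvb hbv), hT _ (hbv.tail hvb)⟩
    | tail hvb hbc ih =>
      intro hcv
      exact (ih (.head hbc hcv)).tail
        ⟨hbc, hT _ ((TransGen.head hbc hcv).trans hvb), hT _ ((hcv.trans hvb).tail hbc)⟩
  exact fun v hv => h v (walk_in_T v v hv hv)

/-! ### Dicolourings and redicolouring -/

/-- The monochromatic arcs of `E` under a colouring; a colouring is a dicolouring when these arcs,
all colours taken together, contain no cycle. -/
def MonochromaticArc (E : V → V → Prop) (α : V → Fin k) (u v : V) : Prop :=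
  E u v ∧ α u = α v

theorem isDicolouring_iff_relAcyclic {α : V → Fin k} :
    IsDicolouring E k α ↔ RelAcyclic (MonochromaticArc E α) := by
  refine ⟨fun h v hv => ?_, fun h c => h.mono fun a b hab => ⟨hab.1, hab.2.1.trans hab.2.2.symm⟩⟩
  have colour_const : ∀ w, TransGen (MonochromaticArc E α) v w →
      TransGen (fun a b => E a b ∧ α a = α v ∧ α b = α v) v w ∧ α w = α v := by
    intro w hw
    induction hw with
    | single hvb => exact ⟨.single ⟨hvb.1, rfl, hvb.2.symm⟩, hvb.2.symm⟩
    | tail _ hbc ih =>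
      exact ⟨ih.1.tail ⟨hbc.1, ih.2, hbc.2.symm.trans ih.2⟩, hbc.2.symm.trans ih.2⟩
  exact h (α v) v (colour_const v hv).1

theorem IsDicolouring.comp_injective {l : ℕ} {α : V → Fin k} {f : Fin k → Fin l}
    (h : IsDicolouring E k α) (hf : Injective f) : IsDicolouring E l (f ∘ α) :=
  isDicolouring_iff_relAcyclic.2 <|
    (isDicolouring_iff_relAcyclic.1 h).mono fun _ _ hab => ⟨hab.1, hf hab.2⟩

theorem isDicolouring_swap {α : V → Fin k} :
    IsDicolouring (swap E) k α ↔ IsDicolouring E k α := by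
  have reversed : MonochromaticArc (swap E) α = swap (MonochromaticArc E α) := by
    ext a b
    simp only [MonochromaticArc, swap, eq_comm]
  simp only [isDicolouring_iff_relAcyclic, RelAcyclic, reversed, transGen_swap]

/-- Two colourings joined by a path in the `k`-dicolouring graph of `E`. -/
def RecolReachable (E : V → V → Prop) (α β : V → Fin k) : Prop :=
  ReflTransGen (RecolStep E k) α β

namespace RecolReachable

variable {α β γ : V → Fin k}

theorem refl (α : V → Fin k) : RecolReachable E α α := ReflTransGen.refl

theorem trans (h : RecolReachable E α β) (h' : RecolReachable E β γ) : RecolReachable E α γ :=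
  ReflTransGen.trans h h'

theorem symm (h : RecolReachable E α β) : RecolReachable E β α := by
  have : Std.Symm (RecolStep E k) :=
    ⟨fun _ _ ⟨ha, hb, v, hv, hne⟩ => ⟨hb, ha, v, hv.symm, fun w hw => (hne w hw).symm⟩⟩
  exact ReflTransGen.stdSymm.symm _ _ h

theorem isDicolouring (h : RecolReachable E α β) (hα : IsDicolouring E k α) :
    IsDicolouring E k β := by
  induction h with
  | refl => exact hα
  | tail _ hstep _ => exact hstep.2.1

theorem comp_injective {l : ℕ} {f : Fin k → Fin l} (h : RecolReachable E α β) (hf : Injective f) :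
    RecolReachable E (f ∘ α) (f ∘ β) := by
  refine ReflTransGen.lift (f ∘ ·) ?_ _ _ h
  rintro a b ⟨ha, hb, v, hv, hne⟩
  exact ⟨ha.comp_injective hf, hb.comp_injective hf, v, hf.ne hv, fun w hw => congrArg f (hne w hw)⟩

theorem of_forall_ne {v : V} (hα : IsDicolouring E k α) (hβ : IsDicolouring E k β)
    (h : ∀ w, w ≠ v → α w = β w) : RecolReachable E α β := by
  by_cases hv : α v = β v
  · obtain rfl : α = β := by
      ext1 w
      by_cases hw : w = v
      · rw [hw, hv]
      · exact h w hw
    exact refl α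
  · exact .single ⟨hα, hβ, v, hv, h⟩

theorem of_interval [Finite V]
    (h : ∀ δ : V → Fin k, (∀ x, δ x = α x ∨ δ x = β x) → IsDicolouring E k δ) :
    RecolReachable E α β := by
  classical
  have := Fintype.ofFinite V
  have between : ∀ F : Finset V, IsDicolouring E k (F.piecewise β α) :=
    fun F => h _ fun x => by by_cases hx : x ∈ F <;> simp [hx]
  suffices ∀ F : Finset V, RecolReachable E α (F.piecewise β α) by simpa using this Finset.univ
  intro F
  induction F using Finset.induction_on with
  | empty => simpa using refl α
  | insert a F _ ih =>
    refine ih.trans (of_forall_ne (v := a) (between F) (between _) fun w hw => ?_)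
    rw [Finset.piecewise_insert, update_of_ne hw]

theorem apply_eq_of_injective {f : Fin k → Fin k} {y₁ y₂ : V} (h : RecolReachable E α β)
    (hf : Injective f) (hne : y₁ ≠ y₂) (hδ : ∀ δ, RecolReachable E α δ → δ y₂ = f (δ y₁)) :
    β y₁ = α y₁ := by
  induction h with
  | refl => rfl
  | @tail γ γ' hγ hstep ih =>
    obtain ⟨-, -, x, -, hoff⟩ := id hstep
    rw [← ih]
    by_cases hx : y₁ = x
    · subst hx
      apply hf
      rw [← hδ γ' (hγ.tail hstep), ← hδ γ hγ, hoff y₂ hne.symm]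
    · exact (hoff _ hx).symm

end RecolReachable

theorem recolReachable_swap {α β : V → Fin k} :
    RecolReachable (swap E) α β ↔ RecolReachable E α β := by
  have same_step : RecolStep (swap E) k = RecolStep E k := by
    ext a b
    simp only [RecolStep, isDicolouring_swap]
  rw [RecolReachable, RecolReachable, same_step]

theorem mixing_swap : Mixing (swap E) k ↔ Mixing E k := by
  simp only [Mixing, isDicolouring_swap]
  exact forall₄_congr fun _ _ _ _ => recolReachable_swap

theorem exists_isDicolouring_apply_eq_add (hm : Mixing E 2) {γ : V → Fin 2}
    (hγ : IsDicolouring E 2 γ) {y₁ y₂ : V} (hne : y₁ ≠ y₂) (d : Fin 2) :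
    ∃ δ, IsDicolouring E 2 δ ∧ δ y₂ = δ y₁ + d := by
  by_contra! hcon
  have reach : RecolReachable E γ ((· + 1) ∘ γ) :=
    hm _ _ hγ (hγ.comp_injective (add_left_injective 1))
  have fixed := reach.apply_eq_of_injective (add_left_injective (d + 1)) hne fun δ hδ => by
    have := hcon δ (hδ.isDicolouring hγ)
    omega
  simp only [comp_apply] at fixed
  omega

theorem exists_isDicolouring_constant_on [Finite V] (hm : Mixing E 2) {γ : V → Fin 2}
    (hγ : IsDicolouring E 2 γ) {T : Set V} (hT : T.ncard ≤ 2) :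
    ∃ δ, IsDicolouring E 2 δ ∧ ∃ c, ∀ x ∈ T, δ x = c := by
  obtain hT | hT : T.ncard ≤ 1 ∨ T.ncard = 2 := by omega
  · obtain rfl | ⟨y, hy⟩ := T.eq_empty_or_nonempty
    · exact ⟨γ, hγ, 0, by simp⟩
    · have := Set.ncard_le_one_iff_subsingleton.1 hT
      exact ⟨γ, hγ, γ y, fun x hx => by rw [this hx hy]⟩
  · obtain ⟨y₁, y₂, hne, rfl⟩ := Set.ncard_eq_two.1 hT
    obtain ⟨δ, hδ, heq⟩ := exists_isDicolouring_apply_eq_add hm hγ hne 0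
    exact ⟨δ, hδ, δ y₁, by simp [heq]⟩

/-! ### Vertex deletion -/

/-- The digraph `E - X`, kept on the vertex type of `E` by isolating the vertices of `X`. -/
def deleteVerts (E : V → V → Prop) (X : Set V) (u v : V) : Prop :=
  E u v ∧ u ∉ X ∧ v ∉ X

theorem deleteVerts_swap (X : Set V) : deleteVerts (swap E) X = swap (deleteVerts E X) := by
  ext a b
  simp only [deleteVerts, swap, and_comm (a := a ∉ X)]

namespace IsDicolouring

variable {X : Set V} {α β : V → Fin k}

theorem to_deleteVerts (h : IsDicolouring E k α) (X : Set V) :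
    IsDicolouring (deleteVerts E X) k α :=
  isDicolouring_iff_relAcyclic.2 <|
    (isDicolouring_iff_relAcyclic.1 h).mono fun _ _ hab => ⟨hab.1.1, hab.2⟩

theorem congr_deleteVerts (h : IsDicolouring (deleteVerts E X) k α)
    (heq : Set.EqOn β α Xᶜ) : IsDicolouring (deleteVerts E X) k β :=
  isDicolouring_iff_relAcyclic.2 <| (isDicolouring_iff_relAcyclic.1 h).mono fun _ _ hab =>
    ⟨hab.1, by rw [← heq hab.1.2.1, ← heq hab.1.2.2, hab.2]⟩

theorem of_deleteVerts (h : IsDicolouring (deleteVerts E X) k α)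
    (hX : ∀ x ∈ X, ¬ TransGen (MonochromaticArc E α) x x) : IsDicolouring E k α := by
  rw [isDicolouring_iff_relAcyclic] at h ⊢
  refine RelAcyclic.of_restrict (T := Xᶜ) (h.mono ?_) fun x hx hxX => hX x hxX hx
  exact fun a b hab => ⟨⟨hab.1.1, hab.2⟩, hab.1.2⟩

end IsDicolouring

theorem mixing_of_forall_not_arc_out {s : V} (hs : ∀ y, ¬ E s y)
    (hm : Mixing (deleteVerts E {s}) k) : Mixing E k := by
  have extend : ∀ δ, IsDicolouring (deleteVerts E {s}) k δ → IsDicolouring E k δ := by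
    refine fun δ hδ => hδ.of_deleteVerts ?_
    rintro x rfl hcycle
    obtain ⟨y, hxy, -⟩ := exists_succ_of_transGen_self hcycle
    exact hs y hxy.1
  intro α β hα hβ
  refine ReflTransGen.mono (fun a b hab => ?_) _ _
    (hm α β (hα.to_deleteVerts _) (hβ.to_deleteVerts _))
  exact ⟨extend a hab.1, extend b hab.2.1, hab.2.2⟩

/-! ### Pendant stars -/

theorem Oriented.irrefl (ho : Oriented E) (v : V) : ¬ E v v := fun h => ho v v h h

theorem Oriented.swap (ho : Oriented E) : Oriented (Function.swap E) := fun u v => ho v u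

/-- The in-neighbours of `s` whose only out-neighbour is `s`. -/
def inPendants (E : V → V → Prop) (s : V) : Set V := {p | E p s ∧ ∀ y, E p y → y = s}

/-- The out-neighbours of `s` whose only in-neighbour is `s`. -/
def outPendants (E : V → V → Prop) (s : V) : Set V := {p | E s p ∧ ∀ y, E y p → y = s}

/-- The in- and out-pendants of `s`; each of them lies on no cycle avoiding `s`. -/
def pendants (E : V → V → Prop) (s : V) : Set V := inPendants E s ∪ outPendants E s

/-- The pendant star of `s`, which is deleted and recoloured as a unit. -/
def pendantStar (E : V → V → Prop) (s : V) : Set V := insert s (pendants E s)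

/-- The in-neighbours of `s` other than its in-pendants; when `E` is oriented, these are the
in-neighbours outside the pendant star. -/
def coreIn (E : V → V → Prop) (s : V) : Set V := {x | E x s} \ inPendants E s

/-- The out-neighbours of `s` other than its out-pendants; when `E` is oriented, these are the
out-neighbours outside the pendant star. -/
def coreOut (E : V → V → Prop) (s : V) : Set V := {x | E s x} \ outPendants E s

theorem pendants_swap (s : V) : pendants (swap E) s = pendants E s := Set.union_comm _ _

theorem pendantStar_swap (s : V) : pendantStar (swap E) s = pendantStar E s :=
  congrArg (insert s) (pendants_swap s)

theorem notMem_pendants_self {s : V} (hs : ¬ E s s) : s ∉ pendants E s :=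
  fun h => h.elim (fun h => hs h.1) (fun h => hs h.1)

theorem Oriented.notMem_pendantStar_of_mem_coreOut (ho : Oriented E) {s x : V}
    (hx : x ∈ coreOut E s) : x ∉ pendantStar E s := by
  rintro (rfl | hin | hout)
  · exact ho.irrefl x hx.1
  · exact ho s x hx.1 hin.1
  · exact hx.2 hout

theorem Oriented.notMem_pendantStar_of_mem_coreIn (ho : Oriented E) {s x : V}
    (hx : x ∈ coreIn E s) : x ∉ pendantStar E s := by
  rw [← pendantStar_swap]
  exact ho.swap.notMem_pendantStar_of_mem_coreOut hx

theorem IsDicolouring.of_recolour_pendants {s : V} (hs : ¬ E s s) {α β : V → Fin k}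
    (h : IsDicolouring E k α) (hβ : ∀ x, β x ≠ α x → x ∈ pendants E s ∧ β x ≠ α s) :
    IsDicolouring E k β := by
  have hβs : β s = α s := by
    by_contra hne
    exact notMem_pendants_self hs (hβ s hne).1
  rw [isDicolouring_iff_relAcyclic] at h ⊢
  refine RelAcyclic.of_restrict (T := {x | β x = α x}) (h.mono ?_) fun x hcycle => ?_
  · rintro a b ⟨hab, ha, hb⟩
    exact ⟨hab.1, ha.symm.trans (hab.2.trans hb)⟩
  · by_contra hx
    obtain ⟨hin | hout, hne⟩ := hβ x hx
    · obtain ⟨y, hxy, -⟩ := exists_succ_of_transGen_self hcycle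
      exact hne (by rw [hxy.2, hin.2 y hxy.1, hβs])
    · obtain ⟨y, hyx, -⟩ := exists_pred_of_transGen_self hcycle
      exact hne (by rw [← hyx.2, hout.2 y hyx.1, hβs])

theorem IsDicolouring.of_deleteVerts_pendantStar {s : V} {α : V → Fin k}
    (hα : IsDicolouring (deleteVerts E (pendantStar E s)) k α)
    (h : (∀ y, E s y → α y ≠ α s) ∨ ∀ y, E y s → α y ≠ α s) : IsDicolouring E k α := by
  have no_cycle_at_s : ¬ TransGen (MonochromaticArc E α) s s := by
    intro hcycle
    obtain h | h := h
    · obtain ⟨y, hsy, -⟩ := exists_succ_of_transGen_self hcycle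
      exact h y hsy.1 hsy.2.symm
    · obtain ⟨y, hys, -⟩ := exists_pred_of_transGen_self hcycle
      exact h y hys.1 hys.2
  refine hα.of_deleteVerts ?_
  rintro x (rfl | hin | hout) hcycle
  · exact no_cycle_at_s hcycle
  · obtain ⟨y, hxy, hy⟩ := exists_succ_of_transGen_self hcycle
    exact no_cycle_at_s (hin.2 y hxy.1 ▸ hy)
  · obtain ⟨y, hyx, hy⟩ := exists_pred_of_transGen_self hcycle
    exact no_cycle_at_s (hout.2 y hyx.1 ▸ hy)

theorem RecolReachable.of_forall_out [Finite V] {s : V} {α β : V → Fin k}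
    (hα : IsDicolouring (deleteVerts E (pendantStar E s)) k α)
    (heq : Set.EqOn β α (pendantStar E s)ᶜ) (hs : β s = α s)
    (hαs : ∀ y, E s y → α y ≠ α s) (hβs : ∀ y, E s y → β y ≠ β s) : RecolReachable E α β := by
  refine .of_interval fun δ hδ => (hα.congr_deleteVerts fun x hx => ?_).of_deleteVerts_pendantStar
    (.inl fun y hy => ?_)
  · exact (hδ x).elim id fun h => h.trans (heq hx)
  · have hδs : δ s = α s := (hδ s).elim id fun h => h.trans hs
    obtain h | h := hδ y
    · rw [h, hδs]
      exact hαs y hy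
    · rw [h, hδs, ← hs]
      exact hβs y hy

theorem RecolReachable.of_forall_in [Finite V] {s : V} {α β : V → Fin k}
    (hα : IsDicolouring (deleteVerts E (pendantStar E s)) k α)
    (heq : Set.EqOn β α (pendantStar E s)ᶜ) (hs : β s = α s)
    (hαs : ∀ y, E y s → α y ≠ α s) (hβs : ∀ y, E y s → β y ≠ β s) : RecolReachable E α β := by
  rw [← recolReachable_swap]
  rw [← pendantStar_swap] at heq
  refine .of_forall_out ?_ heq hs hαs hβs
  rwa [pendantStar_swap, deleteVerts_swap, isDicolouring_swap]

/- Of the pendants, first recolour the in-neighbours of `s`, then `s`, then the out-neighbours: the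
first phase is safe because `s` differs in colour from its out-neighbours, the last because it then
differs from its in-neighbours. -/
theorem RecolReachable.of_forall_out_of_forall_in [Finite V] (ho : Oriented E) {s : V}
    {α β : V → Fin k} (hα : IsDicolouring (deleteVerts E (pendantStar E s)) k α)
    (heq : Set.EqOn β α (pendantStar E s)ᶜ) (hαs : ∀ y, E s y → α y ≠ α s)
    (hβs : ∀ y, E y s → β y ≠ β s) : RecolReachable E α β := by
  classical
  let σ (c : Fin k) (x : V) : Fin k := if x = s then c else if E s x then α x else β x
  have σ_self (c : Fin k) : σ c s = c := if_pos rfl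
  have σ_off (c : Fin k) : Set.EqOn (σ c) α (pendantStar E s)ᶜ := fun x hx => by
    have hxs : x ≠ s := fun h => hx (.inl h)
    by_cases hsx : E s x
    · simp [σ, hxs, hsx]
    · simpa [σ, hxs, hsx] using heq hx
  have σ_out (c : Fin k) : ∀ y, E s y → σ c y = α y := fun y hy => by
    simp [σ, hy, show y ≠ s from fun h => ho.irrefl s (h ▸ hy)]
  have σ_in (c : Fin k) : ∀ y, E y s → σ c y = β y := fun y hy => by
    simp [σ, ho y s hy, show y ≠ s from fun h => ho.irrefl s (h ▸ hy)]
  have hσ (c : Fin k) := hα.congr_deleteVerts (σ_off c)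
  have σ_ne_out : ∀ y, E s y → σ (α s) y ≠ σ (α s) s := fun y hy => by
    rw [σ_self, σ_out _ y hy]
    exact hαs y hy
  have σ_ne_in : ∀ y, E y s → σ (β s) y ≠ σ (β s) s := fun y hy => by
    rw [σ_self, σ_in _ y hy]
    exact hβs y hy
  have recolour_before : RecolReachable E α (σ (α s)) :=
    .of_forall_out hα (σ_off _) (σ_self _) hαs σ_ne_out
  have recolour_centre : RecolReachable E (σ (α s)) (σ (β s)) :=
    .of_forall_ne (v := s) ((hσ _).of_deleteVerts_pendantStar (.inl σ_ne_out))
      ((hσ _).of_deleteVerts_pendantStar (.inr σ_ne_in)) fun w hw => by simp [σ, hw]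
  have recolour_after : RecolReachable E (σ (β s)) β :=
    .of_forall_in (hσ _) (heq.trans (σ_off _).symm) (σ_self _).symm σ_ne_in hβs
  exact (recolour_before.trans recolour_centre).trans recolour_after

/-! ### Star colourings -/

open scoped Classical in
/-- The `2`-colouring that agrees with `γ` off the pendant star of `s`, gives `s` the colour `c`
and gives its pendants the other colour. -/
noncomputable def starColouring (E : V → V → Prop) (s : V) (c : Fin 2) (γ : V → Fin 2) (x : V) :
    Fin 2 :=
  if x = s then c else if x ∈ pendants E s then c + 1 else γ x

/-- The condition under which a dicolouring `γ` of `E` minus the pendant star of `s` extends to the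
star colouring of `E` with centre colour `c`. -/
def StarAdmissible (E : V → V → Prop) (s : V) (c : Fin 2) (γ : V → Fin 2) : Prop :=
  (∀ y ∈ coreOut E s, γ y ≠ c) ∨ ∀ y ∈ coreIn E s, γ y ≠ c

/-- The condition under which the colour of the centre `s` can be changed with `γ` kept fixed off
the pendant star of `s`. -/
def Flippable (E : V → V → Prop) (s : V) (γ : V → Fin 2) : Prop :=
  ∃ c, (∀ x ∈ coreIn E s, γ x = c) ∧ ∀ x ∈ coreOut E s, γ x ≠ c

section StarColouring

variable {s x : V} {c : Fin 2} {γ : V → Fin 2}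

@[simp]
theorem starColouring_self : starColouring E s c γ s = c := if_pos rfl

theorem starColouring_of_mem_pendants (hs : ¬ E s s) (hx : x ∈ pendants E s) :
    starColouring E s c γ x = c + 1 := by
  have hne : x ≠ s := fun h => notMem_pendants_self hs (h ▸ hx)
  rw [starColouring, if_neg hne, if_pos hx]

theorem starColouring_of_notMem (hx : x ∉ pendantStar E s) : starColouring E s c γ x = γ x := by
  rw [pendantStar, Set.mem_insert_iff, not_or] at hx
  rw [starColouring, if_neg hx.1, if_neg hx.2]

theorem starColouring_swap : starColouring (swap E) s c γ = starColouring E s c γ := by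
  unfold starColouring
  rw [pendants_swap]

theorem starColouring_ne_of_arc_out (ho : Oriented E) (h : ∀ y ∈ coreOut E s, γ y ≠ c) :
    ∀ y, E s y → starColouring E s c γ y ≠ starColouring E s c γ s := by
  intro y hy
  rw [starColouring_self]
  by_cases hp : y ∈ outPendants E s
  · rw [starColouring_of_mem_pendants (ho.irrefl s) (.inr hp)]
    omega
  · rw [starColouring_of_notMem (ho.notMem_pendantStar_of_mem_coreOut ⟨hy, hp⟩)]
    exact h y ⟨hy, hp⟩

theorem starColouring_ne_of_arc_in (ho : Oriented E) (h : ∀ y ∈ coreIn E s, γ y ≠ c) :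
    ∀ y, E y s → starColouring E s c γ y ≠ starColouring E s c γ s := by
  rw [← starColouring_swap]
  exact starColouring_ne_of_arc_out ho.swap h

theorem StarAdmissible.isDicolouring (ho : Oriented E) (h : StarAdmissible E s c γ)
    (hγ : IsDicolouring (deleteVerts E (pendantStar E s)) 2 γ) :
    IsDicolouring E 2 (starColouring E s c γ) :=
  (hγ.congr_deleteVerts fun _ hx => starColouring_of_notMem hx).of_deleteVerts_pendantStar
    (h.imp (starColouring_ne_of_arc_out ho) (starColouring_ne_of_arc_in ho))

theorem IsDicolouring.recolReachable_starColouring [Finite V] (hs : ¬ E s s)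
    (hγ : IsDicolouring E 2 γ) : RecolReachable E γ (starColouring E s (γ s) γ) := by
  refine .of_interval fun δ hδ => hγ.of_recolour_pendants hs fun x hx => ?_
  have hδx := (hδ x).resolve_left hx
  have hxs : x ≠ s := by
    rintro rfl
    exact hx (by rw [hδx, starColouring_self])
  have hp : x ∈ pendants E s := by
    by_contra hp
    exact hx (hδx.trans (starColouring_of_notMem (by simp [pendantStar, hxs, hp])))
  refine ⟨hp, ?_⟩
  rw [hδx, starColouring_of_mem_pendants hs hp]
  omega

theorem Flippable.recolReachable [Finite V] (ho : Oriented E) (h : Flippable E s γ)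
    (hγ : IsDicolouring (deleteVerts E (pendantStar E s)) 2 γ) (a b : Fin 2) :
    RecolReachable E (starColouring E s a γ) (starColouring E s b γ) := by
  obtain ⟨c, hin, hout⟩ := h
  have hflip : RecolReachable E (starColouring E s c γ) (starColouring E s (c + 1) γ) := by
    refine .of_forall_out_of_forall_in ho
      (hγ.congr_deleteVerts fun _ hx => starColouring_of_notMem hx) (fun x hx => ?_)
      (starColouring_ne_of_arc_out ho hout) (starColouring_ne_of_arc_in ho fun y hy => ?_)
    · rw [starColouring_of_notMem hx, starColouring_of_notMem hx]
    · have := hin y hy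
      omega
  obtain rfl | ⟨rfl, rfl⟩ | ⟨rfl, rfl⟩ : a = b ∨ a = c ∧ b = c + 1 ∨ a = c + 1 ∧ b = c := by
    omega
  · exact .refl _
  · exact hflip
  · exact hflip.symm

end StarColouring

/-! ### Lifting paths from the complement of a pendant star -/

section Lifting

variable {s r x : V} {c : Fin 2} {γ γ' : V → Fin 2}

theorem Flippable.starAdmissible (h : Flippable E s γ) (c : Fin 2) : StarAdmissible E s c γ := by
  obtain ⟨d, hin, hout⟩ := h
  obtain rfl | hcd := eq_or_ne c d
  · exact .inl hout
  · exact .inr fun y hy => hin y hy ▸ hcd.symm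

theorem StarAdmissible.recolReachable_of_recolStep (ho : Oriented E)
    (hstep : RecolStep (deleteVerts E (pendantStar E s)) 2 γ γ') (h : StarAdmissible E s c γ)
    (h' : StarAdmissible E s c γ') :
    RecolReachable E (starColouring E s c γ) (starColouring E s c γ') := by
  obtain ⟨hγ, hγ', v, -, hv⟩ := hstep
  refine .of_forall_ne (v := v) (h.isDicolouring ho hγ) (h'.isDicolouring ho hγ') fun w hw => ?_
  simp only [starColouring, hv w hw]

theorem recolReachable_of_exists_flippable [Finite V] (ho : Oriented E)
    (hm : Mixing (deleteVerts E (pendantStar E s)) 2)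
    (hstep : ∀ γ γ', RecolStep (deleteVerts E (pendantStar E s)) 2 γ γ' →
      (∀ c, StarAdmissible E s c γ → StarAdmissible E s c γ') ∨
        Flippable E s γ ∧ ∃ c, StarAdmissible E s c γ')
    (hflip : ∃ γ, IsDicolouring (deleteVerts E (pendantStar E s)) 2 γ ∧ Flippable E s γ)
    {α β : V → Fin 2} (hα : IsDicolouring E 2 α) (hαs : StarAdmissible E s (α s) α)
    (hβ : IsDicolouring E 2 β) (hβs : StarAdmissible E s (β s) β) : RecolReachable E α β := by
  obtain ⟨γ, hγ, hflip⟩ := hflip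
  have lift_path : ∀ δ, RecolReachable (deleteVerts E (pendantStar E s)) δ γ →
      ∀ c, StarAdmissible E s c δ →
        RecolReachable E (starColouring E s c δ) (starColouring E s 0 γ) := by
    intro δ hδγ
    induction hδγ using ReflTransGen.head_induction_on with
    | refl => exact fun c _ => hflip.recolReachable ho hγ c 0
    | @head δ δ' hδ _ ih =>
      intro c hc
      obtain hkeep | ⟨hδflip, c', hc'⟩ := hstep δ δ' hδ
      · exact (hc.recolReachable_of_recolStep ho hδ (hkeep c hc)).trans (ih c (hkeep c hc))
      · exact ((hδflip.recolReachable ho hδ.1 c c').trans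
          ((hδflip.starAdmissible c').recolReachable_of_recolStep ho hδ hc')).trans (ih c' hc')
  have to_flippable : ∀ δ, IsDicolouring E 2 δ → StarAdmissible E s (δ s) δ →
      RecolReachable E δ (starColouring E s 0 γ) := fun δ hδ hδs =>
    (hδ.recolReachable_starColouring (ho.irrefl s)).trans
      (lift_path δ (hm _ _ (hδ.to_deleteVerts _) hγ) _ hδs)
  exact (to_flippable α hα hαs).trans (to_flippable β hβ hβs).symm

theorem mixing_of_coreIn_eq_empty [Finite V] (ho : Oriented E)
    (hm : Mixing (deleteVerts E (pendantStar E s)) 2) (hin : coreIn E s = ∅)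
    (hout : (coreOut E s).ncard ≤ 2) : Mixing E 2 := by
  intro α β hα hβ
  have admissible : ∀ c γ, StarAdmissible E s c γ := fun c γ => .inr (by simp [hin])
  refine recolReachable_of_exists_flippable ho hm (fun _ _ _ => .inl fun c _ => admissible c _) ?_
    hα (admissible _ _) hβ (admissible _ _)
  obtain ⟨γ, hγ, c, hc⟩ := exists_isDicolouring_constant_on hm (hα.to_deleteVerts _) hout
  refine ⟨γ, hγ, c + 1, by simp [hin], fun x hx => ?_⟩
  have := hc x hx
  omega

theorem starAdmissible_iff_of_eq_singleton (hin : coreIn E s = {r}) (hout : coreOut E s = {x}) :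
    StarAdmissible E s c γ ↔ ¬ (γ r = c ∧ γ x = c) := by
  simp only [StarAdmissible, hin, hout, Set.mem_singleton_iff, forall_eq]
  tauto

theorem flippable_of_eq_singleton (hin : coreIn E s = {r}) (hout : coreOut E s = {x})
    (hne : γ r ≠ γ x) : Flippable E s γ :=
  ⟨γ r, by simp [hin], by simpa [hout] using hne.symm⟩

theorem recolReachable_of_starAdmissible [Finite V] (ho : Oriented E)
    (hm : Mixing (deleteVerts E (pendantStar E s)) 2) (hin : coreIn E s = {r})
    (hout : coreOut E s = {x}) {α β : V → Fin 2} (hα : IsDicolouring E 2 α)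
    (hαs : StarAdmissible E s (α s) α) (hβ : IsDicolouring E 2 β)
    (hβs : StarAdmissible E s (β s) β) : RecolReachable E α β := by
  have hrs : r ∈ coreIn E s := by simp [hin]
  have hsx : x ∈ coreOut E s := by simp [hout]
  have hrx : r ≠ x := by
    rintro rfl
    exact ho _ _ hrs.1 hsx.1
  refine recolReachable_of_exists_flippable ho hm (fun γ γ' hstep => ?_) ?_ hα hαs hβ hβs
  · simp only [starAdmissible_iff_of_eq_singleton hin hout]
    by_cases hγ : γ r = γ x
    · left
      rintro c hc ⟨hr, hx⟩
      obtain ⟨-, -, v, -, hv⟩ := hstep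
      have hrv : r = v := by
        by_contra hne
        have := hv r hne
        omega
      have := hv x (hrv ▸ hrx.symm)
      omega
    · exact .inr ⟨flippable_of_eq_singleton hin hout hγ, γ' r + 1, by omega⟩
  · obtain ⟨γ, hγ, hne⟩ := exists_isDicolouring_apply_eq_add hm (hα.to_deleteVerts _) hrx 1
    exact ⟨γ, hγ, flippable_of_eq_singleton hin hout (by omega)⟩

end Lifting

/-! ### Critical digraphs -/

/-- `E` is an oriented graph on the vertex set `S` (the vertices outside `S` are isolated) that is
not `2`-mixing, whereas deleting any vertex of `S`, possibly with others, makes it `2`-mixing. -/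
structure IsCritical (E : V → V → Prop) (S : Set V) : Prop where
  oriented : Oriented E
  mem_of_arc : ∀ u v, E u v → u ∈ S ∧ v ∈ S
  mixing_deleteVerts : ∀ X : Set V, (S ∩ X).Nonempty → Mixing (deleteVerts E X) 2
  not_mixing : ¬ Mixing E 2

theorem exists_isCritical [Finite V] (ho : Oriented E) (hm : ¬ Mixing E 2) :
    ∃ S : Set V, IsCritical (deleteVerts E Sᶜ) S := by
  have univ_not_mixing : ¬ Mixing (deleteVerts E (Set.univ : Set V)ᶜ) 2 := by
    have delete_none : deleteVerts E (Set.univ : Set V)ᶜ = E := by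
      ext u v
      simp [deleteVerts]
    rwa [delete_none]
  obtain ⟨S, hS⟩ := exists_minimal_of_wellFoundedLT
    (fun S : Set V => ¬ Mixing (deleteVerts E Sᶜ) 2) ⟨Set.univ, univ_not_mixing⟩
  refine ⟨S, fun u v huv hvu => ho u v huv.1 hvu.1,
    fun u v huv => ⟨not_not.1 huv.2.1, not_not.1 huv.2.2⟩, ?_, hS.prop⟩
  rintro X ⟨s, hsS, hsX⟩
  have delete_twice : deleteVerts (deleteVerts E Sᶜ) X = deleteVerts E (S \ X)ᶜ := by
    ext u v
    simp only [deleteVerts, Set.mem_compl_iff, Set.mem_sdiff, not_not]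
    tauto
  rw [delete_twice]
  by_contra hcon
  exact (hS.le_of_le hcon Set.sdiff_subset hsS).2 hsX

namespace IsCritical

variable {S : Set V} {s : V}

theorem swap (hc : IsCritical E S) : IsCritical (Function.swap E) S where
  oriented := hc.oriented.swap
  mem_of_arc u v huv := (hc.mem_of_arc v u huv).symm
  mixing_deleteVerts X hX := by
    rw [deleteVerts_swap, mixing_swap]
    exact hc.mixing_deleteVerts X hX
  not_mixing := mt mixing_swap.1 hc.not_mixing

theorem nonempty [Finite V] (hc : IsCritical E S) : S.Nonempty := by
  by_contra hS
  refine hc.not_mixing fun α β _ _ => RecolReachable.of_interval fun δ _ => ?_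
  refine isDicolouring_iff_relAcyclic.2 fun v hv => hS ⟨v, ?_⟩
  obtain ⟨y, hvy, -⟩ := exists_succ_of_transGen_self hv
  exact (hc.mem_of_arc v y hvy.1).1

theorem mixing_deleteVerts_pendantStar (hc : IsCritical E S) (hs : s ∈ S) :
    Mixing (deleteVerts E (pendantStar E s)) 2 :=
  hc.mixing_deleteVerts _ ⟨s, hs, .inl rfl⟩

theorem exists_arc_out (hc : IsCritical E S) (hs : s ∈ S) : ∃ y, E s y := by
  by_contra! hcon
  exact hc.not_mixing (mixing_of_forall_not_arc_out hcon (hc.mixing_deleteVerts _ ⟨s, hs, rfl⟩))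

theorem three_le_ncard_coreOut [Finite V] (hc : IsCritical E S) (hs : s ∈ S)
    (hin : coreIn E s = ∅) : 3 ≤ (coreOut E s).ncard := by
  by_contra! hlt
  exact hc.not_mixing <|
    mixing_of_coreIn_eq_empty hc.oriented (hc.mixing_deleteVerts_pendantStar hs) hin (by omega)

end IsCritical

/-! ### Unswappable colourings -/

/-- A `2`-dicolouring that cannot be redicoloured into the one with the two colours exchanged. -/
def Unswappable (E : V → V → Prop) (α : V → Fin 2) : Prop :=
  IsDicolouring E 2 α ∧ ¬ RecolReachable E α ((· + 1) ∘ α)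

theorem unswappable_swap {α : V → Fin 2} : Unswappable (swap E) α ↔ Unswappable E α := by
  simp only [Unswappable, isDicolouring_swap, recolReachable_swap]

/-- `α` is a `2`-dicolouring from which no redicolouring sequence changes the colour of `x`. -/
structure FrozenAt (E : V → V → Prop) (α : V → Fin 2) (x : V) : Prop where
  isDicolouring : IsDicolouring E 2 α
  apply_eq : ∀ δ, RecolReachable E α δ → δ x = α x

theorem frozenAt_swap {α : V → Fin 2} {x : V} : FrozenAt (swap E) α x ↔ FrozenAt E α x :=
  ⟨fun h => ⟨isDicolouring_swap.1 h.1, fun δ hδ => h.2 δ (recolReachable_swap.2 hδ)⟩,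
    fun h => ⟨isDicolouring_swap.2 h.1, fun δ hδ => h.2 δ (recolReachable_swap.1 hδ)⟩⟩

theorem FrozenAt.exists_arc_out {α δ : V → Fin 2} {x : V} (h : FrozenAt E α x) (ho : Oriented E)
    (hδ : RecolReachable E α δ) :
    ∃ g y, E x g ∧ E g y ∧ δ g = α x + 1 ∧ δ y = α x + 1 := by
  classical
  by_contra! hcon
  have off : ∀ w, w ≠ x → update δ x (α x + 1) w = δ w := fun w hw => update_of_ne hw _ _
  have recolour_dicolouring : IsDicolouring E 2 (update δ x (α x + 1)) := by
    refine (((hδ.isDicolouring h.isDicolouring).to_deleteVerts {x}).congr_deleteVerts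
      off).of_deleteVerts ?_
    rintro z (hz : z = x) hcycle
    rw [hz] at hcycle
    obtain ⟨g, hxg, hg⟩ := exists_succ_of_transGen_self hcycle
    obtain ⟨y, hgy, -⟩ := exists_succ_of_transGen_self hg
    have hgx : g ≠ x := fun h => ho.irrefl x (h ▸ hxg.1)
    have hyx : y ≠ x := fun h => ho x g hxg.1 (h ▸ hgy.1)
    have hδg : δ g = α x + 1 := by rw [← off g hgx, ← hxg.2, update_self]
    exact hcon g y hxg.1 hgy.1 hδg (by rw [← off y hyx, ← hgy.2, off g hgx, hδg])
  have := h.apply_eq _ (hδ.trans (.of_forall_ne (v := x) (hδ.isDicolouring h.isDicolouring)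
    recolour_dicolouring fun w hw => (off w hw).symm))
  rw [update_self] at this
  omega

theorem FrozenAt.exists_arc_in {α δ : V → Fin 2} {x : V} (h : FrozenAt E α x) (ho : Oriented E)
    (hδ : RecolReachable E α δ) :
    ∃ g y, E g x ∧ E y g ∧ δ g = α x + 1 ∧ δ y = α x + 1 :=
  (frozenAt_swap.2 h).exists_arc_out ho.swap (recolReachable_swap.2 hδ)

theorem FrozenAt.not_flippable [Finite V] {α : V → Fin 2} {s : V} (h : FrozenAt E α s)
    (ho : Oriented E) : ¬ Flippable E s α := by
  intro hflip
  have := h.apply_eq _ ((h.isDicolouring.recolReachable_starColouring (ho.irrefl s)).trans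
    (hflip.recolReachable ho (h.isDicolouring.to_deleteVerts _) _ (α s + 1)))
  rw [starColouring_self] at this
  omega

namespace IsCritical

variable {S : Set V} {s r x : V} {α δ : V → Fin 2}

theorem apply_eq_of_unswappable [Finite V] (hc : IsCritical E S) (hs : s ∈ S)
    (hin : coreIn E s = {r}) (hout : coreOut E s = {x}) (hα : Unswappable E α)
    (hδ : RecolReachable E α δ) : δ r = δ s ∧ δ x = δ s := by
  by_contra hcon
  have hδ' := hδ.isDicolouring hα.1
  have hswap : Injective ((· + 1) : Fin 2 → Fin 2) := add_left_injective 1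
  have swap_δ : RecolReachable E δ ((· + 1) ∘ δ) := by
    refine recolReachable_of_starAdmissible hc.oriented (hc.mixing_deleteVerts_pendantStar hs)
      hin hout hδ' ?_ (hδ'.comp_injective hswap) ?_
    all_goals
      rw [starAdmissible_iff_of_eq_singleton hin hout]
      simpa only [comp_apply, hswap.eq_iff] using hcon
  exact hα.2 ((hδ.trans swap_δ).trans (hδ.comp_injective hswap).symm)

theorem exists_unswappable [Finite V] (hc : IsCritical E S) (hs : s ∈ S)
    (hin : coreIn E s = {r}) (hout : coreOut E s = {x}) : ∃ α, Unswappable E α := by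
  by_contra! hcon
  have hrs : r ≠ s := by
    rintro rfl
    exact hc.oriented.irrefl r (hin ▸ Set.mem_singleton r : r ∈ coreIn E r).1
  have reaches_admissible : ∀ α, IsDicolouring E 2 α →
      ∃ δ, RecolReachable E α δ ∧ StarAdmissible E s (δ s) δ := by
    intro α hα
    by_contra! hblocked
    simp only [starAdmissible_iff_of_eq_singleton hin hout, not_not] at hblocked
    have hswap : RecolReachable E α ((· + 1) ∘ α) := not_not.1 fun h => hcon α ⟨hα, h⟩
    have := hswap.apply_eq_of_injective injective_id hrs fun δ hδ => (hblocked δ hδ).1.symm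
    simp only [comp_apply] at this
    omega
  refine hc.not_mixing fun α β hα hβ => ?_
  obtain ⟨α', hα', hadm⟩ := reaches_admissible α hα
  obtain ⟨β', hβ', hadm'⟩ := reaches_admissible β hβ
  exact (hα'.trans (recolReachable_of_starAdmissible hc.oriented
    (hc.mixing_deleteVerts_pendantStar hs) hin hout (hα'.isDicolouring hα) hadm
    (hβ'.isDicolouring hβ) hadm')).trans hβ'.symm

theorem frozenAt_of_unswappable [Finite V] (hc : IsCritical E S) (hs : s ∈ S)
    (hin : coreIn E s = {r}) (hout : coreOut E s = {x}) (hα : Unswappable E α) :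
    FrozenAt E α s := by
  have hrs : s ≠ r := by
    rintro rfl
    exact hc.oriented.irrefl s (hin ▸ Set.mem_singleton s : s ∈ coreIn E s).1
  exact ⟨hα.1, fun δ hδ => hδ.apply_eq_of_injective injective_id hrs fun δ' hδ' =>
    (hc.apply_eq_of_unswappable hs hin hout hα hδ').1⟩

theorem exists_mem_inPendants [Finite V] (hc : IsCritical E S) (hs : s ∈ S)
    (hin : coreIn E s = {r}) (hout : coreOut E s = {x}) (hα : Unswappable E α)
    (hδ : RecolReachable E α δ) :
    ∃ g ∈ inPendants E s, ∃ y, E y g ∧ δ g = α s + 1 ∧ δ y = α s + 1 := by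
  have hfrozen := hc.frozenAt_of_unswappable hs hin hout hα
  obtain ⟨g, y, hgs, hyg, hδg, hδy⟩ := hfrozen.exists_arc_in hc.oriented hδ
  refine ⟨g, ?_, y, hyg, hδg, hδy⟩
  by_contra hg
  obtain rfl : g = r := by
    have : g ∈ coreIn E s := ⟨hgs, hg⟩
    rwa [hin] at this
  have := (hc.apply_eq_of_unswappable hs hin hout hα hδ).1
  have := hfrozen.apply_eq δ hδ
  omega

end IsCritical

/-! ### Claims -/

/-- The degree of `v` in the underlying graph of an oriented graph. -/
noncomputable def deg (E : V → V → Prop) (v : V) : ℕ := {w | E v w}.ncard + {w | E w v}.ncard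

theorem deg_swap (v : V) : deg (swap E) v = deg E v := add_comm _ _

theorem ncard_succ_eq_one_iff {v : V} :
    {y | E v y}.ncard = 1 ↔ ∃ w, v ∈ inPendants E w :=
  Set.ncard_eq_one.trans <| exists_congr fun _ => Set.eq_singleton_iff_unique_mem

/-- A frozen vertex `v` with a single out-neighbour `w` and exactly two in-neighbours, both frozen
and of different colours, claims charge from the in-neighbour `t` that has not its own colour. -/
structure InClaim (E : V → V → Prop) (α : V → Fin 2) (v t : V) : Prop where
  frozenAt_source : FrozenAt E α v
  frozenAt_target : FrozenAt E α t
  apply_target : α t = α v + 1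
  exists_mem_inPendants : ∃ w, v ∈ inPendants E w
  exists_pred_eq : ∃ u, FrozenAt E α u ∧ α u = α v ∧ {y | E y v} = {u, t}

theorem FrozenAt.exists_inClaim {α : V → Fin 2} {v w : V} (h : FrozenAt E α v) (ho : Oriented E)
    (hw : v ∈ inPendants E w) (hdeg : deg E v = 3)
    (hpred : ∀ δ, RecolReachable E α δ → ∃ u, E u v ∧ δ u = α v) : ∃ t, InClaim E α v t := by
  have hcard : {y | E y v}.ncard = 2 := by
    have := ncard_succ_eq_one_iff.2 ⟨w, hw⟩
    rw [deg] at hdeg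
    omega
  obtain ⟨a, b, hab, heq⟩ := Set.ncard_eq_two.1 hcard
  have hmem : ∀ y, E y v → y = a ∨ y = b := fun y hy => by
    have : y ∈ {y | E y v} := hy
    rwa [heq] at this
  have colours_differ : ∀ δ, RecolReachable E α δ → δ b = δ a + 1 := by
    intro δ hδ
    obtain ⟨u, huv, hu⟩ := hpred δ hδ
    obtain ⟨g, -, hgv, -, hg, -⟩ := h.exists_arc_in ho hδ
    obtain rfl | rfl := hmem u huv <;> obtain rfl | rfl := hmem g hgv <;> omega
  have frozen_a : FrozenAt E α a := ⟨h.isDicolouring, fun δ hδ =>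
    hδ.apply_eq_of_injective (add_left_injective 1) hab colours_differ⟩
  have frozen_b : FrozenAt E α b := ⟨h.isDicolouring, fun δ hδ =>
    hδ.apply_eq_of_injective (add_left_injective 1) hab.symm fun δ' hδ' => by
      have := colours_differ δ' hδ'
      omega⟩
  have hα := colours_differ α (.refl α)
  by_cases ha : α a = α v
  · exact ⟨b, h, frozen_b, by omega, ⟨w, hw⟩, a, frozen_a, ha, heq⟩
  · exact ⟨a, h, frozen_a, by omega, ⟨w, hw⟩, b, frozen_b, by omega, by rw [heq, Set.pair_comm]⟩

namespace InClaim

variable {α δ : V → Fin 2} {v t w y : V}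

theorem apply_of_arc_out (h : InClaim E α v t) (ho : Oriented E) (hδ : RecolReachable E α δ)
    (hvy : E v y) : δ y = α v + 1 := by
  obtain ⟨w, hw⟩ := h.exists_mem_inPendants
  obtain ⟨g, -, hvg, -, hg, -⟩ := h.frozenAt_source.exists_arc_out ho hδ
  rw [hw.2 y hvy, ← hw.2 g hvg, hg]

theorem mem_coreOut (h : InClaim E α v t) : v ∈ coreOut E t := by
  obtain ⟨u, -, hu, heq⟩ := h.exists_pred_eq
  have htv : t ∈ {y | E y v} := by simp [heq]
  have huv : u ∈ {y | E y v} := by simp [heq]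
  refine ⟨htv, fun hp => ?_⟩
  have := h.apply_target
  rw [hp.2 u huv] at hu
  omega

theorem exists_mem_coreIn_apply_eq [Finite V] (h : InClaim E α v t) (ho : Oriented E)
    (hδ : RecolReachable E α δ) : ∃ e ∈ coreIn E t, δ e = α t := by
  have ht := ho.irrefl t
  have hαt := h.apply_target
  obtain ⟨u, hu, huv, heq⟩ := h.exists_pred_eq
  have hreach := hδ.trans ((hδ.isDicolouring hu.isDicolouring).recolReachable_starColouring ht)
  rw [h.frozenAt_target.apply_eq δ hδ] at hreach
  obtain ⟨g, e, hgv, heg, hg, he⟩ := h.frozenAt_source.exists_arc_in ho hreach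
  obtain rfl : g = t := by
    have hmem : g ∈ {y | E y v} := hgv
    rw [heq] at hmem
    refine hmem.resolve_left ?_
    rintro rfl
    have := hu.apply_eq _ hreach
    omega
  have he_notMem : e ∉ pendants E g := fun hp => by
    rw [starColouring_of_mem_pendants ht hp] at he
    omega
  have hcore : e ∈ coreIn E g := ⟨heg, fun hp => he_notMem (.inl hp)⟩
  rw [starColouring_of_notMem (ho.notMem_pendantStar_of_mem_coreIn hcore)] at he
  exact ⟨e, hcore, by rw [he, hαt]⟩

theorem exists_arc_out_not_inClaim (h : InClaim E α v t) (ho : Oriented E)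
    (hδ : RecolReachable E α δ) :
    ∃ g y, E t g ∧ E g y ∧ δ g = α t + 1 ∧ δ y = α t + 1 ∧ ¬ InClaim E α g t := by
  obtain ⟨g, y, htg, hgy, hg, hy⟩ := h.frozenAt_target.exists_arc_out ho hδ
  refine ⟨g, y, htg, hgy, hg, hy, fun hclaim => ?_⟩
  have := hclaim.apply_of_arc_out ho hδ hgy
  have := hclaim.apply_target
  omega

theorem exists_succ_eq_pair (h : InClaim E α v t) (ho : Oriented E)
    (hout : {w | E t w}.ncard = 2) :
    ∃ g, {w | E t w} = {v, g} ∧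
      ∀ δ, RecolReachable E α δ → δ g = α t + 1 ∧ ∃ y, E g y ∧ δ y = α t + 1 := by
  obtain ⟨a, b, hab, heq⟩ := Set.ncard_eq_two.1 hout
  obtain ⟨g, heq⟩ : ∃ g, {w | E t w} = {v, g} := by
    have hv : v ∈ {w | E t w} := h.mem_coreOut.1
    rw [heq] at hv
    obtain rfl | rfl := hv
    · exact ⟨b, heq⟩
    · exact ⟨a, by rw [heq, Set.pair_comm]⟩
  refine ⟨g, heq, fun δ hδ => ?_⟩
  obtain ⟨g', y, htg', hgy, hg', hy, hclaim⟩ := h.exists_arc_out_not_inClaim ho hδ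
  obtain rfl : g' = g := by
    have hmem : g' ∈ {w | E t w} := htg'
    rw [heq] at hmem
    exact hmem.resolve_left fun hgv => hclaim (hgv ▸ h)
  exact ⟨hg', y, hgy, hy⟩

end InClaim

/-! ### Charge received by the neighbours of a vertex -/

/-- `v` claims charge from `t`, either as in `InClaim` or as in the dual situation where `v` has a
single in-neighbour and exactly two out-neighbours. -/
def Claims (E : V → V → Prop) (α : V → Fin 2) (v t : V) : Prop :=
  InClaim E α v t ∨ InClaim (swap E) α v t

/-- The vertices with an `InClaim` on `t`. -/
def inClaimers (E : V → V → Prop) (α : V → Fin 2) (t : V) : Set V := {v | InClaim E α v t}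

/-- The pendants of `s` of degree `3` that claim nothing; they receive their charge from `s`. -/
def idlePendants (E : V → V → Prop) (α : V → Fin 2) (s : V) : Set V :=
  {p ∈ pendants E s | deg E p = 3 ∧ ∀ t, ¬ Claims E α p t}

/-- The vertices that receive charge from `s` in the discharging argument. -/
def receivers (E : V → V → Prop) (α : V → Fin 2) (s : V) : Set V :=
  {v | Claims E α v s} ∪ idlePendants E α s

section Receivers

variable {α : V → Fin 2} {s : V}

theorem claims_swap {v t : V} : Claims (swap E) α v t ↔ Claims E α v t := or_comm

theorem receivers_swap : receivers (swap E) α s = receivers E α s := by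
  simp only [receivers, idlePendants, pendants_swap, deg_swap, claims_swap]

theorem ncard_receivers_le (E : V → V → Prop) (α : V → Fin 2) (s : V) :
    (receivers E α s).ncard ≤
      (inClaimers E α s).ncard + (inClaimers (swap E) α s).ncard + (idlePendants E α s).ncard :=
  (Set.ncard_union_le _ _).trans (Nat.add_le_add_right (Set.ncard_union_le _ _) _)

variable [Finite V]

theorem ncard_coreOut_add_ncard_outPendants (E : V → V → Prop) (s : V) :
    (coreOut E s).ncard + (outPendants E s).ncard = {w | E s w}.ncard :=
  Set.ncard_sdiff_add_ncard_of_subset fun _ h => h.1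

theorem ncard_coreIn_add_ncard_inPendants (E : V → V → Prop) (s : V) :
    (coreIn E s).ncard + (inPendants E s).ncard = {w | E w s}.ncard :=
  Set.ncard_sdiff_add_ncard_of_subset fun _ h => h.1

theorem ncard_idlePendants_le (E : V → V → Prop) (α : V → Fin 2) (s : V) :
    (idlePendants E α s).ncard ≤ (inPendants E s).ncard + (outPendants E s).ncard :=
  (Set.ncard_le_ncard fun _ h => h.1).trans (Set.ncard_union_le _ _)

theorem ncard_inClaimers_le_ncard_coreOut (E : V → V → Prop) (α : V → Fin 2) (s : V) :
    (inClaimers E α s).ncard ≤ (coreOut E s).ncard :=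
  Set.ncard_le_ncard fun _ h => h.mem_coreOut

end Receivers

namespace InClaim

variable {α : V → Fin 2} {s v v' : V} [Finite V]

theorem one_le_ncard_inClaimers (h : InClaim E α v s) : 1 ≤ (inClaimers E α s).ncard :=
  (Set.ncard_pos).2 ⟨v, h⟩

theorem ncard_inClaimers_lt (h : InClaim E α v s) (ho : Oriented E) :
    (inClaimers E α s).ncard < {w | E s w}.ncard := by
  obtain ⟨g, -, hsg, -, -, -, hg⟩ := h.exists_arc_out_not_inClaim ho (.refl α)
  exact Set.ncard_lt_ncard ⟨fun _ hw => hw.mem_coreOut.1, fun hsub => hg (hsub hsg)⟩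

theorem ncard_inClaimers_swap_lt (h : InClaim E α v s) (ho : Oriented E) :
    (inClaimers (swap E) α s).ncard < (coreIn E s).ncard := by
  obtain ⟨e, he, hαe⟩ := h.exists_mem_coreIn_apply_eq ho (.refl α)
  refine Set.ncard_lt_ncard ⟨fun _ hw => hw.mem_coreOut, fun hsub => ?_⟩
  have := (hsub he).apply_target
  omega

theorem two_le_ncard_pred (h : InClaim E α v s) (ho : Oriented E) : 2 ≤ {w | E w s}.ncard := by
  obtain ⟨e, he, hαe⟩ := h.exists_mem_coreIn_apply_eq ho (.refl α)
  obtain ⟨g, -, hgs, -, hαg, -⟩ := h.frozenAt_target.exists_arc_in ho (.refl α)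
  refine (Set.one_lt_ncard).2 ⟨e, he.1, g, hgs, ?_⟩
  rintro rfl
  omega

theorem ncard_inClaimers_add_two_le (h : InClaim E α v s) (h' : InClaim (swap E) α v' s)
    (ho : Oriented E) : (inClaimers E α s).ncard + 2 ≤ {w | E s w}.ncard := by
  obtain ⟨g, -, hsg, -, hαg, -, hg⟩ := h.exists_arc_out_not_inClaim ho (.refl α)
  have g_notMem : g ∉ inClaimers E α s := hg
  obtain ⟨e, he, hαe⟩ := h'.exists_mem_coreIn_apply_eq ho.swap (.refl α)
  have e_notMem : e ∉ insert g (inClaimers E α s) := by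
    rintro (rfl | hclaim)
    · omega
    · have := hclaim.apply_target
      omega
  calc (inClaimers E α s).ncard + 2
      = (insert e (insert g (inClaimers E α s))).ncard := by
        rw [Set.ncard_insert_of_notMem e_notMem, Set.ncard_insert_of_notMem g_notMem]
    _ ≤ {w | E s w}.ncard := Set.ncard_le_ncard <|
        Set.insert_subset he.1 (Set.insert_subset hsg fun _ hw => hw.mem_coreOut.1)

theorem ncard_inClaimers_add_two_le_ncard_core (h : InClaim E α v s) (ho : Oriented E) :
    (inClaimers E α s).ncard + 2 ≤ (coreOut E s).ncard + (coreIn E s).ncard := by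
  by_contra! hlt
  have claimers_le := ncard_inClaimers_le_ncard_coreOut E α s
  obtain ⟨e, he, hαe⟩ := h.exists_mem_coreIn_apply_eq ho (.refl α)
  have coreIn_pos := (Set.ncard_pos).2 ⟨e, he⟩
  have coreIn_subsingleton := Set.ncard_le_one_iff_subsingleton.1
    (show (coreIn E s).ncard ≤ 1 by omega)
  have coreOut_eq : inClaimers E α s = coreOut E s :=
    Set.eq_of_subset_of_ncard_le (fun _ hw => hw.mem_coreOut) (by omega)
  refine h.frozenAt_target.not_flippable ho ⟨α s, fun x hx => ?_, fun x hx => ?_⟩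
  · rw [coreIn_subsingleton hx he, hαe]
  · rw [← coreOut_eq] at hx
    have := hx.apply_target
    omega

theorem two_le_ncard_coreIn (h : InClaim E α v s) (ho : Oriented E)
    (hout : ∀ y, E s y → α y ≠ α s) : 2 ≤ (coreIn E s).ncard := by
  classical
  let β (x : V) : Fin 2 := if x ∈ inPendants E s then α s else α x
  have β_out : ∀ y, E s y → β y = α y := fun y hy => if_neg fun hp => ho s y hy hp.1
  have β_self : β s = α s := if_neg fun hp => ho.irrefl s hp.1
  have hβ : RecolReachable E α β := by
    refine .of_forall_out (h.frozenAt_target.isDicolouring.to_deleteVerts _) (fun x hx => ?_)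
      β_self hout fun y hy => ?_
    · exact if_neg fun hp => hx (.inr (.inl hp))
    · rw [β_out y hy, β_self]
      exact hout y hy
  obtain ⟨e, he, hβe⟩ := h.exists_mem_coreIn_apply_eq ho hβ
  obtain ⟨g, -, hgs, -, hβg, -⟩ := h.frozenAt_target.exists_arc_in ho hβ
  have hg : g ∉ inPendants E s := fun hp => by
    have : β g = α s := if_pos hp
    omega
  refine (Set.one_lt_ncard).2 ⟨e, he, g, ⟨hgs, hg⟩, ?_⟩
  rintro rfl
  omega

theorem idlePendants_eq_empty (h : InClaim E α v s) (ho : Oriented E)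
    (hout : {w | E s w}.ncard = 2) (hin : {w | E w s}.ncard = 2) : idlePendants E α s = ∅ := by
  obtain ⟨g, heq, hg⟩ := h.exists_succ_eq_pair ho hout
  have eq_or_eq : ∀ y, E s y → y = v ∨ y = g := fun y hy => by
    have : y ∈ {w | E s w} := hy
    rwa [heq] at this
  have hαg := (hg α (.refl α)).1
  have inPendants_eq : inPendants E s = ∅ := by
    have hα : ∀ y, E s y → α y ≠ α s := by
      intro y hy
      have := h.apply_target
      obtain rfl | rfl := eq_or_eq y hy <;> omega
    have := h.two_le_ncard_coreIn ho hα
    have := ncard_coreIn_add_ncard_inPendants E s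
    exact (Set.ncard_eq_zero).1 (by omega)
  refine Set.eq_empty_of_forall_notMem ?_
  rintro x ⟨hin | hout, hdeg, hidle⟩
  · simp [inPendants_eq] at hin
  · obtain rfl : x = g :=
      (eq_or_eq x hout.1).resolve_left fun hxv => (hxv ▸ h.mem_coreOut).2 hout
    have frozen_x : FrozenAt E α x :=
      ⟨h.frozenAt_source.isDicolouring, fun δ hδ => (hg δ hδ).1.trans hαg.symm⟩
    obtain ⟨t, ht⟩ := (frozenAt_swap.2 frozen_x).exists_inClaim ho.swap (w := s) hout
      (deg_swap x ▸ hdeg) fun δ hδ => by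
        rw [hαg]
        exact (hg δ (recolReachable_swap.1 hδ)).2
    exact hidle t (.inr ht)

theorem ncard_receivers_add_seven_le (h : InClaim E α v s) (ho : Oriented E) :
    (receivers E α s).ncard + 7 ≤ 2 * deg E s := by
  have receivers_le := ncard_receivers_le E α s
  have idle_le := ncard_idlePendants_le E α s
  have claimers_le := ncard_inClaimers_le_ncard_coreOut E α s
  have claimers_pos := h.one_le_ncard_inClaimers
  have swap_claimers_lt := h.ncard_inClaimers_swap_lt ho
  have out_eq := ncard_coreOut_add_ncard_outPendants E s
  have in_eq := ncard_coreIn_add_ncard_inPendants E s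
  have deg_eq : deg E s = {w | E s w}.ncard + {w | E w s}.ncard := rfl
  obtain hnone | ⟨v', h'⟩ := (inClaimers (swap E) α s).eq_empty_or_nonempty
  · rw [hnone, Set.ncard_empty] at receivers_le
    have claimers_lt := h.ncard_inClaimers_lt ho
    have two_le_pred := h.two_le_ncard_pred ho
    have core_ge := h.ncard_inClaimers_add_two_le_ncard_core ho
    obtain hdeg | hdeg : 5 ≤ deg E s ∨ deg E s ≤ 4 := by omega
    · omega
    · have := h.idlePendants_eq_empty ho (by omega) (by omega)
      rw [this, Set.ncard_empty] at receivers_le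
      omega
  · have claimers_lt : (inClaimers E α s).ncard < (coreOut E s).ncard :=
      h'.ncard_inClaimers_swap_lt ho.swap
    have out_ge := h.ncard_inClaimers_add_two_le h' ho
    have in_ge : (inClaimers (swap E) α s).ncard + 2 ≤ {w | E w s}.ncard :=
      h'.ncard_inClaimers_add_two_le h ho.swap
    omega

end InClaim

theorem Claims.ncard_receivers_add_seven_le [Finite V] {α : V → Fin 2} {s v : V}
    (h : Claims E α v s) (ho : Oriented E) : (receivers E α s).ncard + 7 ≤ 2 * deg E s := by
  obtain h | h := h
  · exact h.ncard_receivers_add_seven_le ho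
  · rw [← receivers_swap, ← deg_swap]
    exact h.ncard_receivers_add_seven_le ho.swap

/-! ### Discharging -/

namespace IsCritical

variable {S : Set V} {s r x g v : V} {α : V → Fin 2}

theorem exists_mem_receivers [Finite V] (hc : IsCritical E S) (hv : v ∈ S) (hdeg : deg E v = 3) :
    ∃ s ∈ S, v ∈ receivers E α s := by
  by_cases hclaim : ∃ t, Claims E α v t
  · obtain ⟨t, ht⟩ := hclaim
    obtain htS : t ∈ S := ht.elim (fun h => (hc.mem_of_arc t v h.mem_coreOut.1).1)
      fun h => (hc.mem_of_arc v t h.mem_coreOut.1).2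
    exact ⟨t, htS, .inl ht⟩
  have idle_of_pendant : ∀ w, v ∈ pendants E w → v ∈ receivers E α w := fun w hw =>
    .inr ⟨hw, hdeg, not_exists.1 hclaim⟩
  have succ_pos : 0 < {w | E v w}.ncard := (Set.ncard_pos).2 (hc.exists_arc_out hv)
  have pred_pos : 0 < {w | E w v}.ncard := (Set.ncard_pos).2 (hc.swap.exists_arc_out hv)
  obtain h | h : {w | E v w}.ncard = 1 ∨ {w | E w v}.ncard = 1 := by
    rw [deg] at hdeg
    omega
  · obtain ⟨w, hw⟩ := ncard_succ_eq_one_iff.1 h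
    exact ⟨w, (hc.mem_of_arc v w hw.1).2, idle_of_pendant w (.inl hw)⟩
  · obtain ⟨w, hw⟩ := (ncard_succ_eq_one_iff (E := Function.swap E)).1 h
    exact ⟨w, (hc.mem_of_arc w v hw.1).1, idle_of_pendant w (.inr hw)⟩

theorem exists_inClaim_of_inPendants_eq_singleton [Finite V] (hc : IsCritical E S) (hs : s ∈ S)
    (hin : coreIn E s = {r}) (hout : coreOut E s = {x}) (hα : Unswappable E α)
    (hg : inPendants E s = {g}) (hdeg : deg E g = 3) : ∃ t, InClaim E α g t := by
  have hgs : g ∈ inPendants E s := by simp [hg]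
  have colour_g : ∀ δ, RecolReachable E α δ → δ g = α s + 1 ∧ ∃ y, E y g ∧ δ y = α s + 1 := by
    intro δ hδ
    obtain ⟨g', hg', y, hyg, hδg, hδy⟩ := hc.exists_mem_inPendants hs hin hout hα hδ
    obtain rfl : g' = g := by rwa [hg] at hg'
    exact ⟨hδg, y, hyg, hδy⟩
  have hαg := (colour_g α (.refl α)).1
  have frozen_g : FrozenAt E α g := ⟨hα.1, fun δ hδ => (colour_g δ hδ).1.trans hαg.symm⟩
  exact frozen_g.exists_inClaim hc.oriented hgs hdeg fun δ hδ => hαg ▸ (colour_g δ hδ).2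

theorem ncard_idlePendants_add_seven_le [Finite V] (hc : IsCritical E S) (hs : s ∈ S)
    (hin : coreIn E s = {r}) (hout : coreOut E s = {x}) (hα : Unswappable E α) :
    (idlePendants E α s).ncard + 7 ≤ 2 * deg E s := by
  obtain ⟨g, hg, -⟩ := hc.exists_mem_inPendants hs hin hout hα (.refl α)
  obtain ⟨g', hg', -⟩ :=
    hc.swap.exists_mem_inPendants hs hout hin (unswappable_swap.2 hα) (.refl α)
  have inPendants_pos := (Set.ncard_pos).2 ⟨g, hg⟩
  have outPendants_pos : 0 < (outPendants E s).ncard := (Set.ncard_pos).2 ⟨g', hg'⟩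
  have idle_le := ncard_idlePendants_le E α s
  have out_eq := ncard_coreOut_add_ncard_outPendants E s
  have in_eq := ncard_coreIn_add_ncard_inPendants E s
  have deg_eq : deg E s = {w | E s w}.ncard + {w | E w s}.ncard := rfl
  rw [hout, Set.ncard_singleton] at out_eq
  rw [hin, Set.ncard_singleton] at in_eq
  obtain hdeg | hdeg : 5 ≤ deg E s ∨ deg E s = 4 := by omega
  · omega
  · have inPendants_eq : inPendants E s = {g} :=
      (Set.eq_of_subset_of_ncard_le (Set.singleton_subset_iff.2 hg)
        (by rw [Set.ncard_singleton]; omega)).symm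
    have idle_subset : idlePendants E α s ⊆ outPendants E s := by
      rintro p ⟨hp | hp, hp_deg, hp_idle⟩
      · obtain rfl : p = g := by rwa [inPendants_eq] at hp
        obtain ⟨t, ht⟩ := hc.exists_inClaim_of_inPendants_eq_singleton hs hin hout hα
          inPendants_eq hp_deg
        exact absurd (.inl ht) (hp_idle t)
      · exact hp
    have := Set.ncard_le_ncard idle_subset
    omega

theorem ncard_receivers_add_seven_le [Finite V] (hc : IsCritical E S) (hs : s ∈ S)
    (hα : (∃ β, Unswappable E β) → Unswappable E α) :
    (receivers E α s).ncard + 7 ≤ 2 * deg E s + if deg E s = 3 then 1 else 0 := by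
  by_cases hclaim : ∃ v, Claims E α v s
  · obtain ⟨v, hv⟩ := hclaim
    exact (hv.ncard_receivers_add_seven_le hc.oriented).trans (Nat.le_add_right _ _)
  have receivers_eq : receivers E α s = idlePendants E α s := by
    simp [receivers, not_exists.1 hclaim]
  rw [receivers_eq]
  by_cases hcore : (coreIn E s).ncard = 1 ∧ (coreOut E s).ncard = 1
  · obtain ⟨r, hin⟩ := Set.ncard_eq_one.1 hcore.1
    obtain ⟨x, hout⟩ := Set.ncard_eq_one.1 hcore.2
    exact (hc.ncard_idlePendants_add_seven_le hs hin hout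
      (hα (hc.exists_unswappable hs hin hout))).trans (Nat.le_add_right _ _)
  · have coreOut_ge : (coreIn E s).ncard = 0 → 3 ≤ (coreOut E s).ncard := fun h =>
      hc.three_le_ncard_coreOut hs ((Set.ncard_eq_zero).1 h)
    have coreIn_ge : (coreOut E s).ncard = 0 → 3 ≤ (coreIn E s).ncard := fun h =>
      hc.swap.three_le_ncard_coreOut hs ((Set.ncard_eq_zero).1 h)
    have idle_le := ncard_idlePendants_le E α s
    have out_eq := ncard_coreOut_add_ncard_outPendants E s
    have in_eq := ncard_coreIn_add_ncard_inPendants E s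
    have deg_eq : deg E s = {w | E s w}.ncard + {w | E w s}.ncard := rfl
    split_ifs <;> omega

end IsCritical

theorem sum_ncard_succ [Fintype V] (E : V → V → Prop) :
    ∑ v, {w | E v w}.ncard = (arcSet E).ncard :=
  calc ∑ v, {w | E v w}.ncard
      = Nat.card (Σ v, {w // E v w}) := Nat.card_sigma.symm
    _ = (arcSet E).ncard := Nat.card_congr (Equiv.subtypeProdEquivSigmaSubtype E).symm

theorem ncard_arcSet_swap (E : V → V → Prop) : (arcSet (swap E)).ncard = (arcSet E).ncard :=
  Set.ncard_preimage_of_injective_subset_range (s := arcSet E) Prod.swap_injective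
    fun p _ => ⟨p.swap, p.swap_swap⟩

theorem sum_deg [Fintype V] (E : V → V → Prop) : ∑ v, deg E v = 2 * (arcSet E).ncard :=
  calc ∑ v, deg E v
      = ∑ v, {w | E v w}.ncard + ∑ v, {w | swap E v w}.ncard := Finset.sum_add_distrib
    _ = (arcSet E).ncard + (arcSet (swap E)).ncard := by rw [sum_ncard_succ, sum_ncard_succ]
    _ = 2 * (arcSet E).ncard := by rw [ncard_arcSet_swap, two_mul]

theorem IsCritical.seven_mul_ncard_le [Finite V] {S : Set V} (hc : IsCritical E S) :
    7 * S.ncard ≤ 4 * (arcSet E).ncard := by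
  classical
  have := Fintype.ofFinite V
  obtain ⟨α, hα⟩ : ∃ α : V → Fin 2, (∃ β, Unswappable E β) → Unswappable E α := by
    by_cases h : ∃ β, Unswappable E β
    · exact h.imp fun β hβ _ => hβ
    · exact ⟨0, fun h' => absurd h' h⟩
  have degree_three_le : ∑ s ∈ S.toFinset, (if deg E s = 3 then 1 else 0) ≤
      ∑ s ∈ S.toFinset, (receivers E α s).ncard := by
    rw [← Finset.card_filter, ← Set.ncard_coe_finset]
    refine (Set.ncard_le_ncard fun v hv => ?_).trans (Finset.set_ncard_biUnion_le _ _)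
    simp only [Finset.coe_filter, Set.mem_toFinset, Set.mem_ofPred_eq] at hv
    simpa using hc.exists_mem_receivers hv.1 hv.2
  have charge_le : ∑ s ∈ S.toFinset, ((receivers E α s).ncard + 7) ≤
      ∑ s ∈ S.toFinset, (2 * deg E s + if deg E s = 3 then 1 else 0) :=
    Finset.sum_le_sum fun s hs => hc.ncard_receivers_add_seven_le (Set.mem_toFinset.1 hs) hα
  have sum_deg_le : ∑ s ∈ S.toFinset, deg E s ≤ 2 * (arcSet E).ncard :=
    (Finset.sum_le_univ_sum_of_nonneg fun _ => Nat.zero_le _).trans_eq (sum_deg E)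
  rw [Finset.sum_add_distrib, Finset.sum_add_distrib, ← Finset.mul_sum, Finset.sum_const,
    smul_eq_mul, ← Set.ncard_eq_toFinset_card'] at charge_le
  omega

end

/-- If an oriented graph is not `2`-mixing, then its maximum average degree is
at least `7/2`: some nonempty set `S` of vertices satisfies
`2 |A(S)| / |S| ≥ 7/2`, i.e. `4 |A(S)| ≥ 7 |S|`. -/
theorem not_two_mixing_mad {V : Type} [Fintype V] (D : V → V → Prop)
    (horiented : Oriented D) (hnotmixing : ¬ Mixing D 2) :
    ∃ S : Set V, S.Nonempty ∧ 7 * S.ncard ≤ 4 * (arcSetOn D S).ncard := by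
  obtain ⟨S, hS⟩ := exists_isCritical horiented hnotmixing
  have arcs_eq : arcSet (deleteVerts D Sᶜ) = arcSetOn D S := by
    ext ⟨u, v⟩
    simp only [arcSet, arcSetOn, deleteVerts, Set.mem_ofPred_eq, Set.mem_compl_iff, not_not]
    tauto
  exact ⟨S, hS.nonempty, arcs_eq ▸ hS.seven_mul_ncard_le⟩
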